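/- Under the same hypotheses (commuting pairs (H₁⁰,H₂⁰), (H₁,H₂) with V_j = H_j − H_j⁰ ∈ B₂(𝓗), and finite-dimensional approximants H_j^{0(N)}, H_j^{(N)} with projections P_N⁰, P_N from the Weyl–von Neumann–Berg construction), for j = 1,2: ‖P_N (H_j^{(N)} − H_j^{0(N)}) P_N⁰ − P_N V_j P_N⁰‖₂ → 0 as N → ∞; in particular sup_N ‖P_N (H_j^{(N)} − H_j^{0(N)}) P_N⁰‖₂ < ∞. -/

import Mathlib

open MeasureTheory Filter Topology

noncomputable section

/-- The trace computed along a Hilbert basis: `Tr T = Σ_i ⟪b i, T (b i)⟫`. -/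
def traceAlong {H : Type*} [NormedAddCommGroup H] [InnerProductSpace ℂ H] [CompleteSpace H]
    {ι : Type*} (b : HilbertBasis ι ℂ H) (T : H →L[ℂ] H) : ℂ :=
  ∑' i, (inner ℂ (b i) (T (b i)) : ℂ)

/-- The Schatten `p`-norm `‖T‖_p = (Tr |T|^p)^{1/p}`, via the functional calculus
`|T|^p = f(T*T)`, `f(t) = |t|^{p/2}`, with the trace computed along the basis `b`. -/
def schattenNorm {H : Type*} [NormedAddCommGroup H] [InnerProductSpace ℂ H] [CompleteSpace H]
    {ι : Type*} (b : HilbertBasis ι ℂ H) (p : ℝ) (T : H →L[ℂ] H) : ℝ :=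
  (∑' i, (inner ℂ (b i)
      ((cfc (fun t : ℝ => |t| ^ (p / 2)) (ContinuousLinearMap.adjoint T * T)) (b i)) : ℂ).re)
    ^ (1 / p)

/-- Hilbert–Schmidt norm along `b`, as an extended nonnegative real. -/
def hsNorm {H : Type*} [NormedAddCommGroup H] [InnerProductSpace ℂ H]
    (b : HilbertBasis ℕ ℂ H) (T : H →L[ℂ] H) : ENNReal :=
  eLpNorm (fun i => T (b i)) 2 Measure.count

section helpers

variable {H : Type*} [NormedAddCommGroup H] [InnerProductSpace ℂ H]

lemma hsNorm_eq (b : HilbertBasis ℕ ℂ H) (T : H →L[ℂ] H) :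
    hsNorm b T = (∑' i, ‖T (b i)‖ₑ ^ 2) ^ (1 / 2 : ℝ) := by
  unfold hsNorm
  rw [eLpNorm_eq_lintegral_rpow_enorm_toReal (by norm_num) (by norm_num), lintegral_count]
  simp

lemma hsNorm_add_le (b : HilbertBasis ℕ ℂ H) (S T : H →L[ℂ] H) :
    hsNorm b (S + T) ≤ hsNorm b S + hsNorm b T := by
  exact eLpNorm_add_le (f := fun i => S (b i)) (g := fun i => T (b i))
    .of_discrete .of_discrete (by norm_num)

lemma hsNorm_neg (b : HilbertBasis ℕ ℂ H) (T : H →L[ℂ] H) :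
    hsNorm b (-T) = hsNorm b T := by
  simp [hsNorm_eq]

lemma hsNorm_sub_le (b : HilbertBasis ℕ ℂ H) (S T : H →L[ℂ] H) :
    hsNorm b (S - T) ≤ hsNorm b S + hsNorm b T := by
  rw [sub_eq_add_neg, ← hsNorm_neg b T]
  exact hsNorm_add_le b _ _

lemma hsNorm_mul_left_le (b : HilbertBasis ℕ ℂ H) (A T : H →L[ℂ] H) :
    hsNorm b (A * T) ≤ ‖A‖ₑ * hsNorm b T := by
  have h : ∑' i, ‖(A * T) (b i)‖ₑ ^ 2 ≤ ‖A‖ₑ ^ 2 * ∑' i, ‖T (b i)‖ₑ ^ 2 := by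
    rw [← ENNReal.tsum_mul_left]
    refine ENNReal.tsum_le_tsum fun i => ?_
    rw [← mul_pow]
    gcongr
    exact A.le_opENorm _
  rw [hsNorm_eq, hsNorm_eq]
  calc _ ≤ (‖A‖ₑ ^ 2 * ∑' i, ‖T (b i)‖ₑ ^ 2) ^ (1 / 2 : ℝ) := by gcongr
    _ = _ := by
      rw [ENNReal.mul_rpow_of_nonneg _ _ (by norm_num), ← ENNReal.rpow_natCast, ← ENNReal.rpow_mul]
      norm_num

lemma enorm_sq_eq_tsum (b : HilbertBasis ℕ ℂ H) (x : H) :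
    ‖x‖ₑ ^ 2 = ∑' i, ‖(inner ℂ (b i) x : ℂ)‖ₑ ^ 2 := by
  have h := b.hasSum_inner_mul_inner x x
  have h2 : HasSum (fun i => ‖(inner ℂ (b i) x : ℂ)‖ ^ 2) (‖x‖ ^ 2) := by
    have h3 := Complex.hasSum_re h
    convert h3 using 1
    · funext i
      rw [← inner_conj_symm x (b i), mul_comm, Complex.mul_conj, Complex.normSq_eq_norm_sq]
      norm_cast
    · rw [inner_self_eq_norm_sq_to_K]; norm_cast
  have e : ∀ {E : Type _} [NormedAddCommGroup E] (y : E), ‖y‖ₑ ^ 2 = ENNReal.ofReal (‖y‖ ^ 2) := by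
    intro E _ y
    rw [ENNReal.ofReal_pow (norm_nonneg _), ofReal_norm]
  rw [e, ← h2.tsum_eq, ENNReal.ofReal_tsum_of_nonneg (fun _ => by positivity) h2.summable]
  refine tsum_congr fun i => ?_
  rw [ENNReal.ofReal_pow (norm_nonneg _), ofReal_norm]

variable [CompleteSpace H]

lemma hsNorm_adjoint (b : HilbertBasis ℕ ℂ H) (T : H →L[ℂ] H) :
    hsNorm b (ContinuousLinearMap.adjoint T) = hsNorm b T := by
  rw [hsNorm_eq, hsNorm_eq]
  congr 1
  simp_rw [enorm_sq_eq_tsum b]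
  rw [ENNReal.tsum_comm]
  refine tsum_congr fun i => tsum_congr fun j => ?_
  rw [ContinuousLinearMap.adjoint_inner_right, ← ofReal_norm, ← ofReal_norm, norm_inner_symm]

lemma hsNorm_mul_right_le (b : HilbertBasis ℕ ℂ H) (T A : H →L[ℂ] H) :
    hsNorm b (T * A) ≤ ‖A‖ₑ * hsNorm b T := by
  have h := hsNorm_mul_left_le b (ContinuousLinearMap.adjoint A) (ContinuousLinearMap.adjoint T)
  rw [hsNorm_adjoint] at h
  have e : ContinuousLinearMap.adjoint A * ContinuousLinearMap.adjoint T
      = ContinuousLinearMap.adjoint (T * A) := (ContinuousLinearMap.adjoint_comp T A).symm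
  rw [e, hsNorm_adjoint] at h
  simpa [enorm_eq_nnnorm] using h

lemma hsNorm_proj_ne_top (b : HilbertBasis ℕ ℂ H) (P : H →L[ℂ] H)
    (hfin : FiniteDimensional ℂ (LinearMap.range (P : H →ₗ[ℂ] H))) : hsNorm b P ≠ ⊤ := by
  rw [hsNorm_eq]
  refine ENNReal.rpow_ne_top_of_nonneg (by norm_num) ?_
  let e := stdOrthonormalBasis ℂ (LinearMap.range (P : H →ₗ[ℂ] H))
  have key : ∀ x : H, ‖P x‖ₑ ^ 2 = ∑ j, ‖(inner ℂ ((e j : H)) (P x) : ℂ)‖ₑ ^ 2 := by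
    intro x
    have h := e.sum_sq_norm_inner_right ⟨P x, ⟨x, rfl⟩⟩
    simp only [Submodule.coe_inner, Submodule.coe_norm] at h
    rw [← ofReal_norm, ← ENNReal.ofReal_pow (norm_nonneg _), ← h,
      ENNReal.ofReal_sum_of_nonneg (fun _ _ => by positivity)]
    refine Finset.sum_congr rfl fun j _ => ?_
    rw [ENNReal.ofReal_pow (norm_nonneg _), ofReal_norm]
  simp_rw [key]
  rw [Summable.tsum_finsetSum (fun _ _ => ENNReal.summable)]
  refine (ENNReal.sum_lt_top.2 fun j _ => ?_).ne
  have : ∀ i, ‖(inner ℂ ((e j : H)) (P (b i)) : ℂ)‖ₑ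
      = ‖(inner ℂ (b i) (ContinuousLinearMap.adjoint P (e j : H)) : ℂ)‖ₑ := by
    intro i
    rw [ContinuousLinearMap.adjoint_inner_right, ← ofReal_norm, ← ofReal_norm, norm_inner_symm]
  simp_rw [this]
  rw [← enorm_sq_eq_tsum b]
  exact ENNReal.pow_lt_top enorm_lt_top

lemma schattenNorm_two (b : HilbertBasis ℕ ℂ H) (T : H →L[ℂ] H) :
    schattenNorm b 2 T = (hsNorm b T).toReal := by
  have hpos : (0 : H →L[ℂ] H) ≤ ContinuousLinearMap.adjoint T * T :=
    (ContinuousLinearMap.nonneg_iff_isPositive _).2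
      (ContinuousLinearMap.isPositive_adjoint_comp_self T)
  have hc : cfc (fun t : ℝ => |t| ^ ((2 : ℝ) / 2)) (ContinuousLinearMap.adjoint T * T)
      = ContinuousLinearMap.adjoint T * T := by
    conv_rhs => rw [← cfc_id ℝ (ContinuousLinearMap.adjoint T * T) (IsSelfAdjoint.of_nonneg hpos)]
    refine cfc_congr fun x hx => ?_
    have := spectrum_nonneg_of_nonneg hpos hx
    simp [abs_of_nonneg this]
  unfold schattenNorm
  rw [hc, hsNorm_eq, ← ENNReal.toReal_rpow, ENNReal.tsum_toReal_eq (fun i => by simp)]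
  congr 1
  refine tsum_congr fun i => ?_
  rw [mul_apply_eq_comp, ContinuousLinearMap.adjoint_inner_right,
    inner_self_eq_norm_sq_to_K]
  simp
  norm_cast

lemma hs_tendsto (b : HilbertBasis ℕ ℂ H) (T : ℕ → H →L[ℂ] H) (hT : ∀ N, hsNorm b (T N) ≠ ⊤) :
    Tendsto (fun N => schattenNorm b 2 (T N)) atTop (𝓝 0) ↔
      Tendsto (fun N => hsNorm b (T N)) atTop (𝓝 0) := by
  simp_rw [schattenNorm_two]
  exact ENNReal.tendsto_toReal_iff hT ENNReal.zero_ne_top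

lemma proj_enorm_le (P : H →L[ℂ] H) (hP : P * P = P) (hsa : IsSelfAdjoint P) : ‖P‖ₑ ≤ 1 := by
  have h : ‖P‖ * ‖P‖ = ‖P‖ := by
    have := CStarRing.norm_star_mul_self (x := P)
    rw [hsa.star_eq, hP] at this
    exact this.symm
  have h1 : ‖P‖ ≤ 1 := by nlinarith [norm_nonneg P]
  rw [← ofReal_norm]
  exact ENNReal.ofReal_le_one.2 h1

lemma main_aux (b : HilbertBasis ℕ ℂ H) (K0 K : H →L[ℂ] H)
    (hV : Summable fun i => ‖(K - K0) (b i)‖ ^ 2)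
    (P0 P : ℕ → H →L[ℂ] H)
    (hP0proj : ∀ N, P0 N * P0 N = P0 N) (hP0sa : ∀ N, IsSelfAdjoint (P0 N))
    (hP0fin : ∀ N, FiniteDimensional ℂ (LinearMap.range (P0 N : H →ₗ[ℂ] H)))
    (hPproj : ∀ N, P N * P N = P N) (hPsa : ∀ N, IsSelfAdjoint (P N))
    (hPfin : ∀ N, FiniteDimensional ℂ (LinearMap.range (P N : H →ₗ[ℂ] H)))
    (K0N KN : ℕ → H →L[ℂ] H)
    (hKsa : IsSelfAdjoint K) (hKNsa : ∀ N, IsSelfAdjoint (KN N))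
    (a1 : Tendsto (fun N => schattenNorm b 2 (K0 * P0 N - P0 N * K0)) atTop (𝓝 0))
    (a2 : Tendsto (fun N => schattenNorm b 2 (P0 N * K0 * P0 N - K0N N * P0 N)) atTop (𝓝 0))
    (a3 : Tendsto (fun N => schattenNorm b 2 (K * P N - P N * K)) atTop (𝓝 0))
    (a4 : Tendsto (fun N => schattenNorm b 2 (P N * K * P N - KN N * P N)) atTop (𝓝 0)) :
    Tendsto (fun N => schattenNorm b 2 (P N * (KN N - K0N N) * P0 N - P N * (K - K0) * P0 N))
      atTop (𝓝 0) ∧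
    ∃ C : ℝ, ∀ N, schattenNorm b 2 (P N * (KN N - K0N N) * P0 N) ≤ C := by
  have f0 := fun N => hsNorm_proj_ne_top b (P0 N) (hP0fin N)
  have f := fun N => hsNorm_proj_ne_top b (P N) (hPfin N)
  have n0 := fun N => proj_enorm_le (P0 N) (hP0proj N) (hP0sa N)
  have n := fun N => proj_enorm_le (P N) (hPproj N) (hPsa N)
  have fl : ∀ A T : H →L[ℂ] H, hsNorm b T ≠ ⊤ → hsNorm b (A * T) ≠ ⊤ := fun A T h =>
    ne_top_of_le_ne_top (ENNReal.mul_ne_top (by simp) h) (hsNorm_mul_left_le b A T)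
  have fr : ∀ A T : H →L[ℂ] H, hsNorm b T ≠ ⊤ → hsNorm b (T * A) ≠ ⊤ := fun A T h =>
    ne_top_of_le_ne_top (ENNReal.mul_ne_top (by simp) h) (hsNorm_mul_right_le b T A)
  have fs : ∀ S T : H →L[ℂ] H, hsNorm b S ≠ ⊤ → hsNorm b T ≠ ⊤ → hsNorm b (S - T) ≠ ⊤ :=
    fun S T h h' => ne_top_of_le_ne_top (ENNReal.add_ne_top.2 ⟨h, h'⟩) (hsNorm_sub_le b S T)
  have cl : ∀ A T : H →L[ℂ] H, ‖A‖ₑ ≤ 1 → hsNorm b (A * T) ≤ hsNorm b T := fun A T h =>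
    (hsNorm_mul_left_le b A T).trans (mul_le_of_le_one_left' h)
  have cr : ∀ A T : H →L[ℂ] H, ‖A‖ₑ ≤ 1 → hsNorm b (T * A) ≤ hsNorm b T := fun A T h =>
    (hsNorm_mul_right_le b T A).trans (mul_le_of_le_one_left' h)
  rw [hs_tendsto b _ fun N => fs _ _ (fl _ _ (f0 N)) (fr _ _ (f0 N))] at a1
  rw [hs_tendsto b _ fun N => fs _ _ (fl _ _ (f0 N)) (fl _ _ (f0 N))] at a2
  rw [hs_tendsto b _ fun N => fs _ _ (fl _ _ (f N)) (fr _ _ (f N))] at a3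
  rw [hs_tendsto b _ fun N => fs _ _ (fl _ _ (f N)) (fl _ _ (f N))] at a4
  have hfin : ∀ N, hsNorm b (P N * (KN N - K0N N) * P0 N - P N * (K - K0) * P0 N) ≠ ⊤ :=
    fun N => fs _ _ (fl _ _ (f0 N)) (fl _ _ (f0 N))
  have hVfin : hsNorm b (K - K0) ≠ ⊤ := by
    rw [hsNorm_eq]
    refine ENNReal.rpow_ne_top_of_nonneg (by norm_num) ?_
    have := hV.tsum_ofReal_ne_top
    refine ne_of_eq_of_ne (tsum_congr fun i => ?_) this
    rw [ENNReal.ofReal_pow (norm_nonneg _), ofReal_norm]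
  have hlim : Tendsto (fun N => schattenNorm b 2
      (P N * (KN N - K0N N) * P0 N - P N * (K - K0) * P0 N)) atTop (𝓝 0) := by
    rw [hs_tendsto b _ hfin]
    refine tendsto_of_tendsto_of_tendsto_of_le_of_le tendsto_const_nhds
      (h := fun N => hsNorm b (P N * K * P N - KN N * P N) + hsNorm b (K * P N - P N * K)
        + hsNorm b (P0 N * K0 * P0 N - K0N N * P0 N) + hsNorm b (K0 * P0 N - P0 N * K0))
      (by simpa using ((a4.add a3).add a2).add a1) (fun _ => bot_le) fun N => ?_
    have hadj : P N * K * P N - P N * KN N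
        = ContinuousLinearMap.adjoint (P N * K * P N - KN N * P N) := by
      rw [← ContinuousLinearMap.star_eq_adjoint]
      simp [(hPsa N).star_eq, hKsa.star_eq, (hKNsa N).star_eq, mul_assoc]
    have e : P N * (KN N - K0N N) * P0 N - P N * (K - K0) * P0 N
        = P N * (K * P N - P N * K) * P0 N - (P N * K * P N - P N * KN N) * P0 N
          + P N * (P0 N * K0 * P0 N - K0N N * P0 N) + P N * ((K0 * P0 N - P0 N * K0) * P0 N) := by
      have h1 : P N * (K * P N - P N * K) = P N * K * P N - P N * K := by
        rw [mul_sub, ← mul_assoc, ← mul_assoc, hPproj]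
      have h2 : (K0 * P0 N - P0 N * K0) * P0 N = K0 * P0 N - P0 N * K0 * P0 N := by
        rw [sub_mul, mul_assoc, hP0proj]
      rw [h1, h2]
      noncomm_ring
    rw [e]
    have t1 : hsNorm b (P N * (K * P N - P N * K) * P0 N) ≤ hsNorm b (K * P N - P N * K) :=
      (cr _ _ (n0 N)).trans (cl _ _ (n N))
    have t2 : hsNorm b ((P N * K * P N - P N * KN N) * P0 N)
        ≤ hsNorm b (P N * K * P N - KN N * P N) :=
      (cr _ _ (n0 N)).trans (by rw [hadj, hsNorm_adjoint])
    have t3 := cl (P N) (P0 N * K0 * P0 N - K0N N * P0 N) (n N)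
    have t4 : hsNorm b (P N * ((K0 * P0 N - P0 N * K0) * P0 N)) ≤ hsNorm b (K0 * P0 N - P0 N * K0) :=
      (cl _ _ (n N)).trans (cr _ _ (n0 N))
    refine (hsNorm_add_le b _ _).trans (add_le_add ((hsNorm_add_le b _ _).trans
      (add_le_add ((hsNorm_sub_le b _ _).trans ?_) t3)) t4)
    rw [add_comm]
    exact add_le_add t2 t1
  refine ⟨hlim, ?_⟩
  obtain ⟨C, hC⟩ := hlim.bddAbove_range
  refine ⟨C + (hsNorm b (K - K0)).toReal, fun N => ?_⟩
  have hCN := hC ⟨N, rfl⟩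
  simp only [schattenNorm_two] at hCN ⊢
  refine le_trans ?_ (add_le_add_left hCN _)
  rw [← ENNReal.toReal_add (hfin N) hVfin]
  refine ENNReal.toReal_mono (ENNReal.add_ne_top.2 ⟨hfin N, hVfin⟩) ?_
  calc hsNorm b (P N * (KN N - K0N N) * P0 N)
      = hsNorm b ((P N * (KN N - K0N N) * P0 N - P N * (K - K0) * P0 N)
        + P N * (K - K0) * P0 N) := by rw [sub_add_cancel]
    _ ≤ _ := (hsNorm_add_le b _ _).trans
      (add_le_add le_rfl ((cr _ _ (n0 N)).trans (cl _ _ (n N))))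

end helpers

/-- Under the same hypotheses, for `j = 1,2`:
`‖P_N(H_j^{(N)} − H_j^{0(N)})P_N⁰ − P_N V_j P_N⁰‖₂ → 0` as `N → ∞`; in particular
`sup_N ‖P_N(H_j^{(N)} − H_j^{0(N)})P_N⁰‖₂ < ∞`. -/
theorem stmt17
 {H : Type*} [NormedAddCommGroup H] [InnerProductSpace ℂ H] [CompleteSpace H]
    [TopologicalSpace.SeparableSpace H]
    (b : HilbertBasis ℕ ℂ H)
    (H10 H20 H1 H2 : H →L[ℂ] H)
    (h10sa : IsSelfAdjoint H10) (h20sa : IsSelfAdjoint H20)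
    (h1sa : IsSelfAdjoint H1) (h2sa : IsSelfAdjoint H2)
    (hcomm0 : Commute H10 H20) (hcomm : Commute H1 H2)
    (hV1 : Summable fun i => ‖(H1 - H10) (b i)‖ ^ 2)
    (hV2 : Summable fun i => ‖(H2 - H20) (b i)‖ ^ 2)
    (P0 P : ℕ → H →L[ℂ] H)
    (hP0proj : ∀ N, P0 N * P0 N = P0 N) (hP0sa : ∀ N, IsSelfAdjoint (P0 N))
    (hP0fin : ∀ N, FiniteDimensional ℂ (LinearMap.range (P0 N : H →ₗ[ℂ] H)))
    (hP0mono : ∀ N, LinearMap.range (P0 N : H →ₗ[ℂ] H)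
      ≤ LinearMap.range (P0 (N + 1) : H →ₗ[ℂ] H))
    (hP0lim : ∀ x : H, Tendsto (fun N => P0 N x) atTop (𝓝 x))
    (hPproj : ∀ N, P N * P N = P N) (hPsa : ∀ N, IsSelfAdjoint (P N))
    (hPfin : ∀ N, FiniteDimensional ℂ (LinearMap.range (P N : H →ₗ[ℂ] H)))
    (hPmono : ∀ N, LinearMap.range (P N : H →ₗ[ℂ] H)
      ≤ LinearMap.range (P (N + 1) : H →ₗ[ℂ] H))
    (hPlim : ∀ x : H, Tendsto (fun N => P N x) atTop (𝓝 x))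
    (H10N H20N H1N H2N : ℕ → H →L[ℂ] H)
    (h10Nsa : ∀ N, IsSelfAdjoint (H10N N)) (h20Nsa : ∀ N, IsSelfAdjoint (H20N N))
    (h1Nsa : ∀ N, IsSelfAdjoint (H1N N)) (h2Nsa : ∀ N, IsSelfAdjoint (H2N N))
    (hcomm0N : ∀ N, Commute (H10N N) (H20N N)) (hcommN : ∀ N, Commute (H1N N) (H2N N))
    (hsub0 : ∀ N, P0 N * H10N N * P0 N = H10N N * P0 N
      ∧ P0 N * H20N N * P0 N = H20N N * P0 N)
    (hsub : ∀ N, P N * H1N N * P N = H1N N * P N ∧ P N * H2N N * P N = H2N N * P N)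
    (happrox0 : ∀ p : ℝ, 2 ≤ p →
      Tendsto (fun N => schattenNorm b p (H10 * P0 N - P0 N * H10)) atTop (𝓝 0) ∧
      Tendsto (fun N => schattenNorm b p (H20 * P0 N - P0 N * H20)) atTop (𝓝 0) ∧
      Tendsto (fun N => schattenNorm b p (P0 N * H10 * P0 N - H10N N * P0 N)) atTop (𝓝 0) ∧
      Tendsto (fun N => schattenNorm b p (P0 N * H20 * P0 N - H20N N * P0 N)) atTop (𝓝 0))
    (happrox : ∀ p : ℝ, 2 ≤ p →
      Tendsto (fun N => schattenNorm b p (H1 * P N - P N * H1)) atTop (𝓝 0) ∧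
      Tendsto (fun N => schattenNorm b p (H2 * P N - P N * H2)) atTop (𝓝 0) ∧
      Tendsto (fun N => schattenNorm b p (P N * H1 * P N - H1N N * P N)) atTop (𝓝 0) ∧
      Tendsto (fun N => schattenNorm b p (P N * H2 * P N - H2N N * P N)) atTop (𝓝 0))
    : (Tendsto (fun N =>
          schattenNorm b 2 (P N * (H1N N - H10N N) * P0 N - P N * (H1 - H10) * P0 N))
        atTop (𝓝 0)) ∧
      (Tendsto (fun N =>
          schattenNorm b 2 (P N * (H2N N - H20N N) * P0 N - P N * (H2 - H20) * P0 N))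
        atTop (𝓝 0)) ∧
      (∃ C : ℝ, ∀ N,
        schattenNorm b 2 (P N * (H1N N - H10N N) * P0 N) ≤ C ∧
        schattenNorm b 2 (P N * (H2N N - H20N N) * P0 N) ≤ C) := by
  obtain ⟨c1, c2, c3, c4⟩ := happrox0 2 le_rfl
  obtain ⟨d1, d2, d3, d4⟩ := happrox 2 le_rfl
  obtain ⟨r1, C1, hC1⟩ := main_aux b H10 H1 hV1 P0 P hP0proj hP0sa hP0fin hPproj hPsa hPfin
    H10N H1N h1sa h1Nsa c1 c3 d1 d3
  obtain ⟨r2, C2, hC2⟩ := main_aux b H20 H2 hV2 P0 P hP0proj hP0sa hP0fin hPproj hPsa hPfin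
    H20N H2N h2sa h2Nsa c2 c4 d2 d4
  exact ⟨r1, r2, max C1 C2, fun N =>
    ⟨(hC1 N).trans (le_max_left _ _), (hC2 N).trans (le_max_right _ _)⟩⟩

end
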